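/- Let M be a C-minimal structure and let F = {f_u : u ∈ U} and G = {g_{u'} : u' ∈ U'} be nice families of functions with the same domain V and absorbing element e, such that G is derivable relative to F. Let a'_1, a'_2, a'_3 be elements of U' such that C(a'_1, a'_2, a'_3), and let a_i := ∂_{F,G}(a'_i) for i = 1,2,3. Then either C(a_1, a_2, a_3) or a_1 = a_3. -/

import Mathlib

open FirstOrder Set

universe u

namespace CMinPaper

variable {M : Type u}

/-- The axioms of a (dense) C-relation. -/
def IsCRelation (C : M → M → M → Prop) : Prop :=
  (∀ x y z, C x y z → C x z y) ∧
  (∀ x y z, C x y z → ¬ C y x z) ∧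
  (∀ x y z w, C x y z → C x w z ∨ C w y z) ∧
  (∀ x y, x ≠ y → ∃ z, z ≠ y ∧ C x y z)

/-- A cone (open ball). -/
def IsCone (C : M → M → M → Prop) (s : Set M) : Prop :=
  ∃ a b : M, a ≠ b ∧ s = {x | C a x b}

/-- A 0-level set (closed ball). -/
def IsClosedBall (C : M → M → M → Prop) (s : Set M) : Prop :=
  ∃ a b : M, s = {x | ¬ C x a b}

/-- A ball is a cone or a closed ball. -/
def IsBall (C : M → M → M → Prop) (s : Set M) : Prop :=
  IsCone C s ∨ IsClosedBall C s

/-- The node `a ∧ b` of the underlying tree, viewed as the closed ball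
`{z | ¬ C z a b}` of `M` it determines. -/
def node (C : M → M → M → Prop) (a b : M) : Set M := {x | ¬ C x a b}

/-- `Δ(x,y,z)`. -/
def Delta (C : M → M → M → Prop) (x y z : M) : Prop := ¬ C x y z ∧ ¬ C y x z

/-- The (unary) sets which are definable by a quantifier-free formula with
parameters using only `C` and equality.  A term is either the variable
(`Option.none`) or a parameter (`Option.some a`). -/
inductive QFDef (C : M → M → M → Prop) : Set M → Prop
  | atomC (t₁ t₂ t₃ : Option M) :
      QFDef C {x | C (t₁.getD x) (t₂.getD x) (t₃.getD x)}
  | atomEq (t₁ t₂ : Option M) : QFDef C {x | t₁.getD x = t₂.getD x}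
  | compl {s : Set M} : QFDef C s → QFDef C sᶜ
  | union {s t : Set M} : QFDef C s → QFDef C t → QFDef C (s ∪ t)

/-- The ternary relation interpreting the symbol `r`. -/
def interpC (L : FirstOrder.Language.{u, u}) (M : Type u) [L.Structure M]
    (r : L.Relations 3) : M → M → M → Prop :=
  fun a b c => Language.Structure.RelMap r ![a, b, c]

/-- `M` is C-minimal: in every elementarily equivalent structure, every
definable (with parameters) subset is quantifier-free definable using only
`C` and `=`. -/
def CMinimal (L : FirstOrder.Language.{u, u}) (M : Type u) [L.Structure M]
    (r : L.Relations 3) : Prop :=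
  ∀ (N : Type u) (SN : L.Structure N),
    letI := SN
    L.ElementarilyEquivalent M N →
      ∀ s : Set N, Set.Definable₁ (univ : Set N) L s → QFDef (interpC L N r) s

/-- The (model-theoretic) algebraic closure of a set of parameters. -/
def acl (L : FirstOrder.Language.{u, u}) (M : Type u) [L.Structure M] (A : Set M) : Set M :=
  {a | ∃ s : Set M, Set.Definable₁ A L s ∧ s.Finite ∧ a ∈ s}

/-- The Steinitz exchange property for the algebraic closure. -/
def HasExchange (L : FirstOrder.Language.{u, u}) (M : Type u) [L.Structure M] : Prop :=
  ∀ (A : Set M) (a b : M),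
    a ∈ acl L M (A ∪ {b}) → a ∉ acl L M A → b ∈ acl L M (A ∪ {a})

/-- `M` is geometric: acl has the exchange property in every elementarily
equivalent structure. -/
def Geometric (L : FirstOrder.Language.{u, u}) (M : Type u) [L.Structure M] : Prop :=
  ∀ (N : Type u) (SN : L.Structure N),
    letI := SN
    L.ElementarilyEquivalent M N → HasExchange L N

/-- `M` is trivial: in every elementarily equivalent structure the pregeometry
given by acl is trivial. -/
def TrivialGeometry (L : FirstOrder.Language.{u, u}) (M : Type u) [L.Structure M] : Prop :=
  ∀ (N : Type u) (SN : L.Structure N),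
    letI := SN
    L.ElementarilyEquivalent M N →
      ∀ A : Set N, acl L N A = ⋃ a ∈ A, acl L N {a}

/-- `M` is definably maximal: every definable family of cones which is linearly
ordered by inclusion has a non-empty intersection. -/
def DefinablyMaximal (L : FirstOrder.Language.{u, u}) (M : Type u) [L.Structure M]
    (r : L.Relations 3) : Prop :=
  ∀ (n : ℕ) (S : Set (Fin (n + 1) → M)) (P : Set (Fin n → M)),
    Set.Definable (univ : Set M) L S →
    (∀ p ∈ P, IsCone (interpC L M r) {x | Fin.snoc p x ∈ S}) →
    (∀ p ∈ P, ∀ q ∈ P,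
      {x | Fin.snoc p x ∈ S} ⊆ {x | Fin.snoc q x ∈ S} ∨
        {x | Fin.snoc q x ∈ S} ⊆ {x | Fin.snoc p x ∈ S}) →
    P.Nonempty → (⋂ p ∈ P, {x | Fin.snoc p x ∈ S}).Nonempty

/-- Leaves of the underlying tree are the singletons. -/
def IsLeafSet (s : Set M) : Prop := ∃ x : M, s = {x}

/-- The interval `(lo, hi)` of the branch `br c`, consisting of all nodes
(coded as the closed balls they determine) strictly between the endpoints.
`lo = none` denotes `-∞`; `lo = some p` denotes the node `c ∧ p`; `hi : M`
denotes the node `c ∧ hi` (the leaf `c` when `hi = c`).  The tree ordering is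
reverse inclusion of balls. -/
def branchInterval (C : M → M → M → Prop) (c : M) (lo : Option M) (hi : M) :
    Set (Set M) :=
  {B | (∃ s, B = node C c s) ∧ ¬ IsLeafSet B ∧
    (∀ p ∈ lo, B ⊂ node C c p) ∧ node C c hi ⊂ B}

/-- `I` is an interval of the branch `br c`. -/
def IsIntervalOn (C : M → M → M → Prop) (c : M) (I : Set (Set M)) : Prop :=
  ∃ (lo : Option M) (hi : M), I = branchInterval C c lo hi

/-- `I` is a bounded interval of `br c` (bounded from below and from above). -/
def IsBoundedInterval (C : M → M → M → Prop) (c : M) (I : Set (Set M)) : Prop :=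
  ∃ p hi : M, I = branchInterval C c (some p) hi ∧ ¬ IsLeafSet (node C c hi)

/-- `I` is an unbounded (i.e. not bounded) interval of `br c`. -/
def IsUnboundedInterval (C : M → M → M → Prop) (c : M) (I : Set (Set M)) :
    Prop :=
  IsIntervalOn C c I ∧ ¬ IsBoundedInterval C c I

/-- The relation on nodes coded by `S ⊆ M²` via `(s,t) ↦ (c ∧ s, d ∧ t)`. -/
def codedRel (C : M → M → M → Prop) (S : Set (Fin 2 → M)) (c d : M)
    (B B' : Set M) : Prop :=
  ∃ s t : M, ![s, t] ∈ S ∧ B = node C c s ∧ B' = node C d t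

/-- `S ⊆ M²` codes a bijection between the set `I` of nodes of `br c` and the
set `J` of nodes of `br d`. -/
def CodesBijectionBetween (C : M → M → M → Prop) (S : Set (Fin 2 → M))
    (c d : M) (I J : Set (Set M)) : Prop :=
  (∀ B B', codedRel C S c d B B' → B ∈ I ∧ B' ∈ J) ∧
  (∀ B ∈ I, ∃! B', B' ∈ J ∧ codedRel C S c d B B') ∧
  (∀ B' ∈ J, ∃! B, B ∈ I ∧ codedRel C S c d B B')

/-- Condition (NB): there is no definable bijection between a bounded interval
and an unbounded interval of branches of the underlying tree. -/
def NB (L : FirstOrder.Language.{u, u}) (M : Type u) [L.Structure M] (r : L.Relations 3) :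
    Prop :=
  ∀ (c d : M) (S : Set (Fin 2 → M)), Set.Definable (univ : Set M) L S →
    ∀ I J : Set (Set M),
      IsBoundedInterval (interpC L M r) c I →
      IsUnboundedInterval (interpC L M r) d J →
      ¬ CodesBijectionBetween (interpC L M r) S c d I J

/-- An infinite group definable in `M`: an infinite definable `G ⊆ Mⁿ`
together with a definable subset of `M^{3n}` which is the graph of a group
operation on `G`. -/
def DefinableInfiniteGroup (L : FirstOrder.Language.{u, u}) (M : Type u)
    [L.Structure M] : Prop :=
  ∃ (n : ℕ) (G : Set (Fin n → M)) (mul : (Fin n → M) → (Fin n → M) → Fin n → M)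
    (one : Fin n → M) (inv : (Fin n → M) → Fin n → M),
    Set.Definable (univ : Set M) L G ∧ G.Infinite ∧
    Set.Definable (univ : Set M) L
      {t : (Fin n ⊕ (Fin n ⊕ Fin n)) → M |
        t ∘ Sum.inl ∈ G ∧ t ∘ Sum.inr ∘ Sum.inl ∈ G ∧
          mul (t ∘ Sum.inl) (t ∘ Sum.inr ∘ Sum.inl) = t ∘ Sum.inr ∘ Sum.inr} ∧
    one ∈ G ∧ (∀ a ∈ G, ∀ b ∈ G, mul a b ∈ G) ∧
    (∀ a ∈ G, ∀ b ∈ G, ∀ c ∈ G, mul (mul a b) c = mul a (mul b c)) ∧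
    (∀ a ∈ G, mul one a = a ∧ mul a one = a) ∧
    (∀ a ∈ G, inv a ∈ G ∧ mul a (inv a) = one ∧ mul (inv a) a = one)

/-- `g` is a C-isomorphism from `A` onto `B`. -/
def CIsoOn (C : M → M → M → Prop) (A B : Set M) (g : M → M) : Prop :=
  Set.BijOn g A B ∧ ∀ x ∈ A, ∀ y ∈ A, ∀ z ∈ A, (C x y z ↔ C (g x) (g y) (g z))

/-- The relation `C_e(f,g,h)`. -/
def CeRel (C : M → M → M → Prop) (V : Set M) (e : M) (f g h : M → M) : Prop :=
  ∃ W : Set M, IsCone C W ∧ e ∈ W ∧ W ⊆ V ∧ ∀ x ∈ W \ {e}, C (f x) (g x) (h x)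

/-- The relation `(¬C)_e(f,g,h)`. -/
def NCeRel (C : M → M → M → Prop) (V : Set M) (e : M) (f g h : M → M) : Prop :=
  ∃ W : Set M, IsCone C W ∧ e ∈ W ∧ W ⊆ V ∧ ∀ x ∈ W \ {e}, ¬ C (f x) (g x) (h x)

/-- A function is definable on `V` if its graph over `V` is definable. -/
def DefinableFunOn (L : FirstOrder.Language.{u, u}) (M : Type u) [L.Structure M]
    (V : Set M) (g : M → M) : Prop :=
  Set.Definable (univ : Set M) L {t : Fin 2 → M | t 0 ∈ V ∧ g (t 0) = t 1}

/-- A nice family of functions `{f u : u ∈ U}` on the cone `V`, with absorbing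
element `e`. -/
structure NiceFamily (L : FirstOrder.Language.{u, u}) (M : Type u) [L.Structure M]
    (C : M → M → M → Prop) where
  U : Set M
  V : Set M
  e : M
  f : M → M → M
  coneU : IsCone C U
  coneV : IsCone C V
  he : e ∈ V
  definable : Set.Definable (univ : Set M) L
    {t : Fin 3 → M | t 0 ∈ U ∧ t 1 ∈ V ∧ f (t 0) (t 1) = t 2}
  auto : ∀ u ∈ U, CIsoOn C V V (f u)
  fixe : ∀ u ∈ U, f u e = e
  star : ∀ x ∈ V \ {e}, ∃ V' : Set M, V' ⊆ V ∧ IsCone C V' ∧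
    CIsoOn C U V' fun u => f u x

namespace NiceFamily

variable {L : FirstOrder.Language.{u, u}} [L.Structure M] {C : M → M → M → Prop}

/-- `f u` is tangent to `g` relatively to the family. -/
def Tangent (F : NiceFamily L M C) (u : M) (g : M → M) : Prop :=
  u ∈ F.U ∧ ∀ u' ∈ F.U, NCeRel C F.V F.e (F.f u) (F.f u') g

/-- The set `T_g` of indices of tangents to `g`. -/
def Tset (F : NiceFamily L M C) (g : M → M) : Set M := {u | F.Tangent u g}

/-- The set `Γ_{g,u}`. -/
def Gamma (F : NiceFamily L M C) (g : M → M) (u : M) : Set M :=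
  {y | y ∈ F.U ∧ CeRel C F.V F.e (F.f u) (F.f y) g}

/-- `g` is derivable relatively to the family: it has exactly one tangent. -/
def Derivable (F : NiceFamily L M C) (g : M → M) : Prop := ∃! u, F.Tangent u g

/-- `f u` is non-dilating. -/
def NonDilating (F : NiceFamily L M C) (u : M) : Prop :=
  NCeRel C F.V F.e (fun x => F.f u (F.f u x)) (F.f u) id

/-- `u₀` is an identity element for the family. -/
def HasIdentity (F : NiceFamily L M C) (u₀ : M) : Prop :=
  u₀ ∈ F.U ∧ ∀ x ∈ F.V, F.f u₀ x = x

end NiceFamily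

/-- Continuity on `A` with respect to the topology generated by the cones. -/
def ContinuousOnCones (C : M → M → M → Prop) (A : Set M) (g : M → M) : Prop :=
  ∀ x ∈ A, ∀ W : Set M, IsCone C W → g x ∈ W →
    ∃ W' : Set M, IsCone C W' ∧ x ∈ W' ∧ ∀ y ∈ W' ∩ A, g y ∈ W

section CRelation

variable {M : Type u} {C : M → M → M → Prop}

/-- `p` holds on a punctured cone around `e`. -/
def NearCone (C : M → M → M → Prop) (e : M) (p : M → Prop) : Prop :=
  ∃ W : Set M, IsCone C W ∧ e ∈ W ∧ ∀ x ∈ W, x ≠ e → p x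

theorem IsCRelation.irrefl (hC : IsCRelation C) (x y : M) : ¬ C x x y :=
  fun h => hC.2.1 x x y h h

theorem IsCRelation.of_ne (hC : IsCRelation C) {x y : M} (h : x ≠ y) : C x y y := by
  obtain ⟨hs, ha, ht, hn⟩ := hC
  obtain ⟨z, -, hz⟩ := hn x y h
  grind

theorem IsCRelation.nearCone_of (hC : IsCRelation C) {a e : M} (h : a ≠ e) {p : M → Prop}
    (hp : ∀ x, C a x e → x ≠ e → p x) : NearCone C e p :=
  ⟨{x | C a x e}, ⟨a, e, h, rfl⟩, hC.of_ne h, hp⟩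

theorem NearCone.mono {e : M} {p q : M → Prop} (h : NearCone C e p)
    (hpq : ∀ x, x ≠ e → p x → q x) : NearCone C e q := by
  obtain ⟨W, hW, heW, h⟩ := h
  exact ⟨W, hW, heW, fun x hx hxe => hpq x hxe (h x hx hxe)⟩

theorem IsCone.exists_ne_forall_iff (hC : IsCRelation C) {W : Set M} (hW : IsCone C W) {e : M}
    (he : e ∈ W) : ∃ a, a ≠ e ∧ ∀ x, C a x e ↔ x ∈ W := by
  obtain ⟨a, b, -, rfl⟩ := hW
  have hirr := hC.irrefl
  obtain ⟨hs, ha, ht, -⟩ := hC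
  refine ⟨a, ?_, fun x => ?_⟩
  · rintro rfl
    exact hirr _ _ he
  · change C a e b at he
    change _ ↔ C a x b
    grind

theorem IsCone.inter (hC : IsCRelation C) {W W' : Set M} (hW : IsCone C W) (hW' : IsCone C W')
    {e : M} (he : e ∈ W) (he' : e ∈ W') : IsCone C (W ∩ W') := by
  obtain ⟨a, hae, ha⟩ := hW.exists_ne_forall_iff hC he
  obtain ⟨b, hbe, hb⟩ := hW'.exists_ne_forall_iff hC he'
  obtain ⟨hs, hasymm, ht, -⟩ := hC
  by_cases h : C a b e
  · refine ⟨b, e, hbe, ?_⟩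
    ext x
    rw [mem_inter_iff, ← ha, ← hb, mem_ofPred_eq]
    grind
  · refine ⟨a, e, hae, ?_⟩
    ext x
    rw [mem_inter_iff, ← ha, ← hb, mem_ofPred_eq]
    grind

theorem NearCone.and (hC : IsCRelation C) {e : M} {p q : M → Prop} (hp : NearCone C e p)
    (hq : NearCone C e q) : NearCone C e fun x => p x ∧ q x := by
  obtain ⟨W, hW, heW, h⟩ := hp
  obtain ⟨W', hW', heW', h'⟩ := hq
  exact ⟨W ∩ W', hW.inter hC hW' heW heW', ⟨heW, heW'⟩,
    fun x hx hxe => ⟨h x hx.1 hxe, h' x hx.2 hxe⟩⟩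

theorem NearCone.exists (hC : IsCRelation C) {e : M} {p : M → Prop} (hp : NearCone C e p) :
    ∃ x, x ≠ e ∧ p x := by
  obtain ⟨W, hW, heW, h⟩ := hp
  obtain ⟨a, hae, ha⟩ := hW.exists_ne_forall_iff hC heW
  obtain ⟨x, hxe, hx⟩ := hC.2.2.2 a e hae
  exact ⟨x, hxe, h x ((ha x).1 (hC.1 _ _ _ hx)) hxe⟩

theorem nearCone_mem {e : M} {W : Set M} (hW : IsCone C W) (he : e ∈ W) :
    NearCone C e (· ∈ W) :=
  ⟨W, hW, he, fun _ hx _ => hx⟩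

theorem nearCone_middle (hC : IsCRelation C) {e a₀ : M} (h₀ : a₀ ≠ e) (a b : M) :
    NearCone C e (fun x => C a x b) ∨ NearCone C e (fun x => ¬ C a x b) := by
  have hirr := hC.irrefl
  by_cases h : C a e b
  · refine Or.inl (nearCone_mem (W := {x | C a x b}) ⟨a, b, ?_, rfl⟩ h)
    rintro rfl
    exact hirr _ _ (hC.1 _ _ _ h)
  right
  by_cases hab : a = b
  · subst hab
    exact hC.nearCone_of h₀ fun x _ _ hx => hirr _ _ (hC.1 _ _ _ hx)
  have key := @IsCRelation.nearCone_of M C hC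
  obtain ⟨hs, hasymm, ht, -⟩ := hC
  by_cases hae : a = e
  · subst hae
    exact key (Ne.symm hab) (by grind)
  · exact key hae (by grind)

theorem nearCone_left (hC : IsCRelation C) {e a₀ : M} (h₀ : a₀ ≠ e) (a b : M) :
    NearCone C e (fun x => C x a b) ∨ NearCone C e (fun x => ¬ C x a b) := by
  have key := @IsCRelation.nearCone_of M C hC
  have hirr := hC.irrefl
  have hne := @IsCRelation.of_ne M C hC
  obtain ⟨hs, hasymm, ht, -⟩ := hC
  by_cases hae : a = e
  · subst hae
    by_cases hab : a = b
    · subst hab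
      exact Or.inl (key h₀ fun x _ hx => hne hx)
    · exact Or.inr (key (Ne.symm hab) (by grind))
  · by_cases h : C e a b
    · exact Or.inl (key hae (by grind))
    · exact Or.inr (key hae (by grind))

theorem nearCone_ne (hC : IsCRelation C) {e a₀ : M} (h₀ : a₀ ≠ e) (a : M) :
    NearCone C e (fun x => x ≠ a) := by
  by_cases hae : a = e
  · subst hae
    exact hC.nearCone_of h₀ fun x _ hx => hx
  · refine hC.nearCone_of hae ?_
    rintro x hx - rfl
    exact hC.irrefl _ _ hx

/-- A quantifier-free definable set has a constant trace on some punctured cone around `e`. -/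
theorem QFDef.nearCone (hC : IsCRelation C) {e a₀ : M} (h₀ : a₀ ≠ e) {s : Set M}
    (hs : QFDef C s) : NearCone C e (· ∈ s) ∨ NearCone C e (· ∉ s) := by
  have const : ∀ {p : M → Prop}, (∀ x, x ≠ e → p x) → NearCone C e p :=
    fun h => hC.nearCone_of h₀ fun x _ hx => h x hx
  have hirr := hC.irrefl
  have hirr' : ∀ x y, ¬ C x y x := fun x y h => hirr _ _ (hC.1 _ _ _ h)
  induction hs with
  | atomC t₁ t₂ t₃ =>
    rcases t₁ with _ | a <;> rcases t₂ with _ | b <;> rcases t₃ with _ | c <;>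
      simp only [mem_ofPred_eq, Option.getD_none, Option.getD_some]
    · exact Or.inr (const fun x _ => hirr _ _)
    · exact Or.inr (const fun x _ => hirr _ _)
    · exact Or.inr (const fun x _ => hirr' _ _)
    · exact nearCone_left hC h₀ b c
    · exact Or.inl ((nearCone_ne hC h₀ a).mono fun x _ hx => hC.of_ne hx.symm)
    · exact nearCone_middle hC h₀ a c
    · exact (nearCone_middle hC h₀ a b).imp
        (fun h => h.mono fun x _ => hC.1 _ _ _)
        (fun h => h.mono fun x _ hx hx' => hx (hC.1 _ _ _ hx'))
    · by_cases h : C a b c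
      · exact Or.inl (const fun _ _ => h)
      · exact Or.inr (const fun _ _ => h)
  | atomEq t₁ t₂ =>
    rcases t₁ with _ | a <;> rcases t₂ with _ | b <;>
      simp only [mem_ofPred_eq, Option.getD_none, Option.getD_some]
    · exact Or.inl (const fun _ _ => trivial)
    · exact Or.inr (nearCone_ne hC h₀ b)
    · exact Or.inr ((nearCone_ne hC h₀ a).mono fun x _ hx => hx.symm)
    · by_cases h : a = b
      · exact Or.inl (const fun _ _ => h)
      · exact Or.inr (const fun _ _ => h)
  | compl _ ih =>
    exact ih.symm.imp id fun h => h.mono fun x _ hx hx' => hx' hx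
  | union _ _ ih ih' =>
    rcases ih with h | h
    · exact Or.inl (h.mono fun x _ => Or.inl)
    rcases ih' with h' | h'
    · exact Or.inl (h'.mono fun x _ => Or.inr)
    · exact Or.inr ((h.and hC h').mono fun x _ hx => by simpa using hx)

/-- If `D` approximates `s`, and `A` approximates `p`, both more closely than the distance from
`A` to `D`, and `B` approximates `q` at least as well as `D` does, then `B` is to `A` and `D` as
`q` is to `p` and `s`. -/
theorem IsCRelation.of_approx (hC : IsCRelation C) {A B D p q s : M} (h : C p q s)
    (hD : C A D s) (hA : C D A p) (hB : ¬ C B D q) : C A B D := by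
  obtain ⟨hs, hasymm, ht, -⟩ := hC
  have h₁ : C p D s := by grind
  have h₂ : C p D q := by grind
  have h₃ : C A D q := by grind
  grind

theorem NCeRel.nearCone {V : Set M} {e : M} {f g h : M → M} (H : NCeRel C V e f g h) :
    NearCone C e fun x => ¬ C (f x) (g x) (h x) := by
  obtain ⟨W, hW, heW, -, H⟩ := H
  exact ⟨W, hW, heW, fun x hx hxe => H x ⟨hx, hxe⟩⟩

end CRelation

section Definability

variable {L : FirstOrder.Language.{u, u}} {M : Type u} [L.Structure M]

theorem definable_eval_eq {n : ℕ} (i : Fin n) (c : M) :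
    (univ : Set M).Definable L {t : Fin n → M | t i = c} := by
  refine ⟨(Language.Term.var i).equal (L.con (⟨c, mem_univ c⟩ : (univ : Set M))).term, ?_⟩
  ext t
  simp [Language.Formula.realize_equal]

theorem definable_interpC {n : ℕ} (r : L.Relations 3) (i j k : Fin n) :
    (univ : Set M).Definable L {t : Fin n → M | interpC L M r (t i) (t j) (t k)} := by
  refine Set.Definable.mono (A := ∅) ?_ (empty_subset _)
  refine Set.empty_definable_iff.2
    ⟨Language.Relations.formula r
      ![Language.Term.var i, Language.Term.var j, Language.Term.var k], ?_⟩
  ext t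
  simp only [interpC, mem_ofPred_eq, Language.Formula.realize_rel]
  congr! 1
  ext l
  fin_cases l <;> rfl

theorem NiceFamily.definable_eval {C : M → M → M → Prop} (F : NiceFamily L M C) {n : ℕ}
    (i j k : Fin n) : (univ : Set M).Definable L
      {t : Fin n → M | t i ∈ F.U ∧ t j ∈ F.V ∧ F.f (t i) (t j) = t k} :=
  F.definable.preimage_comp ![i, j, k]

/-- The locus on `V` of the relation `C` between two members of `F` and one of `G`. -/
theorem definable_C_members (r : L.Relations 3) (F G : NiceFamily L M (interpC L M r))
    (hV : G.V = F.V) {u v w : M} (hu : u ∈ F.U) (hv : v ∈ F.U) (hw : w ∈ G.U) :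
    (univ : Set M).Definable₁ L
      {x | x ∈ F.V ∧ interpC L M r (F.f u x) (F.f v x) (G.f w x)} := by
  have h := ((((((F.definable_eval (n := 7) 4 0 1).inter (F.definable_eval 5 0 2)).inter
    (G.definable_eval 6 0 3)).inter (definable_interpC r 1 2 3)).inter
    (definable_eval_eq 4 u)).inter (definable_eval_eq 5 v)).inter (definable_eval_eq 6 w)
  have h' := h.image_comp (![0] : Fin 1 → Fin 7)
  unfold Set.Definable₁
  convert h' using 1
  ext t
  constructor
  · rintro ⟨hx, hc⟩
    refine ⟨![t 0, F.f u (t 0), F.f v (t 0), G.f w (t 0), u, v, w],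
      ⟨⟨⟨⟨⟨⟨⟨hu, hx, rfl⟩, hv, hx, rfl⟩, hw, hV ▸ hx, rfl⟩, hc⟩, rfl⟩, rfl⟩, rfl⟩, ?_⟩
    ext l
    fin_cases l
    rfl
  · rintro ⟨y, ⟨⟨⟨⟨⟨⟨⟨-, hx, h₁⟩, -, -, h₂⟩, -, -, h₃⟩, hc⟩, rfl⟩, rfl⟩, rfl⟩, rfl⟩
    refine ⟨hx, ?_⟩
    change interpC L M r (F.f (y 4) (y 0)) (F.f (y 5) (y 0)) (G.f (y 6) (y 0))
    rw [h₁, h₂, h₃]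
    exact hc

end Definability

/-- By C-minimality, failing `(¬C)_e` amounts to satisfying `C` near `e`. -/
theorem nearCone_of_not_NCeRel {L : FirstOrder.Language.{u, u}} {M : Type u} [L.Structure M]
    (r : L.Relations 3) (hC : IsCRelation (interpC L M r)) (hmin : CMinimal L M r)
    (F G : NiceFamily L M (interpC L M r)) (hV : G.V = F.V) {u v w : M} (hu : u ∈ F.U)
    (hv : v ∈ F.U) (hw : w ∈ G.U)
    (h : ¬ NCeRel (interpC L M r) F.V F.e (F.f u) (F.f v) (G.f w)) :
    NearCone (interpC L M r) F.e fun x => interpC L M r (F.f u x) (F.f v x) (G.f w x) := by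
  have hqf := hmin M inferInstance (rfl : L.completeTheory M = L.completeTheory M) _
    (definable_C_members r F G hV hu hv hw)
  obtain ⟨a₀, h₀, -⟩ := F.coneV.exists_ne_forall_iff hC F.he
  rcases hqf.nearCone hC h₀ with hs | hs
  · exact hs.mono fun x _ hx => hx.2
  · obtain ⟨W, hW, heW, hs⟩ := hs
    refine absurd ⟨W ∩ F.V, hW.inter hC F.coneV heW F.he, ⟨heW, F.he⟩, inter_subset_right, ?_⟩ h
    exact fun x hx hx' => hs x hx.1.1 hx.2 ⟨hx.1.2, hx'⟩

/-- A tangent to `G.f w` is strictly closer to it, near `e`, than any member of `F` that is not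
tangent to it. -/
theorem nearCone_of_tangent {L : FirstOrder.Language.{u, u}} {M : Type u} [L.Structure M]
    (r : L.Relations 3) (hC : IsCRelation (interpC L M r)) (hmin : CMinimal L M r)
    (F G : NiceFamily L M (interpC L M r)) (hV : G.V = F.V) {u v w : M} (hw : w ∈ G.U)
    (hv : F.Tangent v (G.f w)) (hu : u ∈ F.U) (hnu : ¬ F.Tangent u (G.f w)) :
    NearCone (interpC L M r) F.e fun x => interpC L M r (F.f u x) (F.f v x) (G.f w x) := by
  obtain ⟨y, hy, hyn⟩ : ∃ y ∈ F.U, ¬ NCeRel (interpC L M r) F.V F.e (F.f u) (F.f y) (G.f w) := by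
    by_contra! h
    exact hnu ⟨hu, h⟩
  refine ((nearCone_of_not_NCeRel r hC hmin F G hV hu hy hw hyn).and hC
    (NCeRel.nearCone (hv.2 y hy))).mono fun x _ hx => ?_
  obtain ⟨hs, hasymm, ht, -⟩ := hC
  grind

theorem statement15 {L : FirstOrder.Language.{u, u}} {M : Type u}
    [L.Structure M] (r : L.Relations 3)
    (hC : IsCRelation (interpC L M r))
    (hmin : CMinimal L M r)
    (F G : NiceFamily L M (interpC L M r))
    (hV : G.V = F.V) (he : G.e = F.e)
    (hder : ∀ u' ∈ G.U, ∃! u : M, F.Tangent u (G.f u'))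
    (d : M → M) (hd : ∀ u' ∈ G.U, F.Tangent (d u') (G.f u'))
    (a1 a2 a3 : M) (h1 : a1 ∈ G.U) (h2 : a2 ∈ G.U) (h3 : a3 ∈ G.U)
    (hCa : interpC L M r a1 a2 a3) :
    interpC L M r (d a1) (d a2) (d a3) ∨ d a1 = d a3 := by
  rw [or_iff_not_imp_right]
  intro hne
  have H13 := nearCone_of_tangent r hC hmin F G hV h3 (hd a3 h3) (hd a1 h1).1
    fun h => hne ((hder a3 h3).unique h (hd a3 h3))
  have H31 := nearCone_of_tangent r hC hmin F G hV h1 (hd a1 h1) (hd a3 h3).1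
    fun h => hne ((hder a1 h1).unique (hd a1 h1) h)
  have H2 := NCeRel.nearCone ((hd a2 h2).2 (d a3) (hd a3 h3).1)
  obtain ⟨x, hxe, ⟨hx13, hx31⟩, hx2, hxV⟩ :=
    ((H13.and hC H31).and hC (H2.and hC (nearCone_mem F.coneV F.he))).exists hC
  obtain ⟨_, -, -, -, hF⟩ := F.star x ⟨hxV, hxe⟩
  obtain ⟨_, -, -, -, hG⟩ := G.star x ⟨hV ▸ hxV, fun h => hxe (h.trans he)⟩
  exact (hF _ (hd a1 h1).1 _ (hd a2 h2).1 _ (hd a3 h3).1).2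
    (hC.of_approx ((hG _ h1 _ h2 _ h3).1 hCa) hx13 hx31 hx2)

end CMinPaper
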